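/- arXiv:2110.14438 — 3 statements merged into one kernel-verified Lean document; each statement's English description precedes it below -/
import Mathlib

section
/- Let n be a positive integer and let S = (s₁,…,s_t) be a composition of n. The number of pairs (A, b), where A is an invertible n×n matrix over 𝔽₂ that is block-lower-triangular with structure S and b ∈ 𝔽₂ⁿ, equals 2^{n(n+1)/2} · ∏_{i=1}^{t} ∏_{j=2}^{s_i} (2^j − 1). -/
/-- The (1-indexed) block number of index `k` for the composition `S = (s₁,…,s_t)`:
the unique `i` with `s₁+⋯+s_{i−1} ≤ k < s₁+⋯+s_i`, computed as the number of
prefix sums of `S` (over proper prefixes) that are `≤ k`. -/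
def blk (S : List ℕ) (k : ℕ) : ℕ :=
  ((List.range S.length).filter (fun i => (S.take i).sum ≤ k)).length

/-- `A` is block-lower-triangular with block structure `S`:
`A k l = 0` whenever the block number of `l` exceeds that of `k`. -/
def IsBLT (S : List ℕ) {n : ℕ} (A : Matrix (Fin n) (Fin n) (ZMod 2)) : Prop :=
  ∀ k l : Fin n, blk S (k : ℕ) < blk S (l : ℕ) → A k l = 0

/-!
The determinant of a block-triangular matrix is the product of the determinants of its diagonal
blocks, so an invertible one consists of invertible diagonal blocks and arbitrary entries on the
allowed side of them. Over `𝔽_q` there are `q ^ (s choose 2) * ∏_{1 ≤ j ≤ s} (q ^ j - 1)` choices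
for a diagonal block of size `s`. Each of the `n choose 2` pairs of indices lies either within a
block, where it is counted by the exponent of that block, or across two blocks, where it is the
position of one free entry; hence the powers of `q` combine to `q ^ (n choose 2)`, whatever the
composition is. The translation contributes `q ^ n`.
-/

open OrderDual

theorem prod_range_pow_sub_pow (q n : ℕ) :
    ∏ i ∈ Finset.range n, (q ^ n - q ^ i) =
      q ^ n.choose 2 * ∏ j ∈ Finset.Icc 1 n, (q ^ j - 1) := by
  calc ∏ i ∈ Finset.range n, (q ^ n - q ^ i)
    _ = ∏ i ∈ Finset.range n, q ^ i * (q ^ (n - i) - 1) := by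
      refine Finset.prod_congr rfl fun i hi ↦ ?_
      rw [Nat.mul_sub, ← pow_add, Nat.add_sub_cancel' (Finset.mem_range.1 hi).le, mul_one]
    _ = q ^ n.choose 2 * ∏ i ∈ Finset.range n, (q ^ (n - i) - 1) := by
      rw [Finset.prod_mul_distrib, Finset.prod_pow_eq_pow_sum, Finset.sum_range_id,
        Nat.choose_two_right]
    _ = q ^ n.choose 2 * ∏ j ∈ Finset.Icc 1 n, (q ^ j - 1) := by
      congr 1
      refine Finset.prod_nbij' (n - ·) (n - ·) ?_ ?_ ?_ ?_ fun _ _ ↦ rfl <;>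
        simp only [Finset.mem_range, Finset.mem_Icc] <;> omega

theorem prod_Icc_one_two_pow_sub_one (s : ℕ) :
    ∏ j ∈ Finset.Icc 1 s, (2 ^ j - 1) = ∏ j ∈ Finset.Icc 2 s, (2 ^ j - 1) := by
  refine (Finset.prod_subset (Finset.Icc_subset_Icc_left one_le_two) fun j hj hj' ↦ ?_).symm
  obtain rfl : j = 1 := by simp only [Finset.mem_Icc] at hj hj'; omega
  rfl

theorem card_isUnit_matrix (m F : Type*) [Fintype m] [DecidableEq m] [Field F] [Fintype F] :
    Nat.card {A : Matrix m m F // IsUnit A} =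
      Fintype.card F ^ (Fintype.card m).choose 2 *
        ∏ j ∈ Finset.Icc 1 (Fintype.card m), (Fintype.card F ^ j - 1) := by
  let n := Fintype.card m
  let reindex : Matrix m m F ≃+* Matrix (Fin n) (Fin n) F :=
    Matrix.reindexRingEquiv F (Fintype.equivFin m)
  let e : {A : Matrix m m F // IsUnit A} ≃ GL (Fin n) F :=
    (reindex.toEquiv.subtypeEquiv fun _ ↦ (MulEquiv.isUnit_map reindex).symm).trans
      Submonoid.unitsTypeEquivIsUnitSubmonoid.symm.toEquiv
  rw [Nat.card_congr e, Matrix.card_GL_field,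
    Fin.prod_univ_eq_prod_range (fun i ↦ Fintype.card F ^ n - Fintype.card F ^ i),
    prod_range_pow_sub_pow]

section BlockTriangular

variable {m α : Type*} [LinearOrder α] (b : m → α)

/-- A block-triangular matrix as the pair of its diagonal blocks and its entries strictly above
them, used to count invertible block-triangular matrices. As in `Matrix.BlockTriangular`, rows and
columns are assigned to blocks by `b`, so a block is a fibre of `b` and may be empty. -/
def blockTriangularEquiv (R : Type*) [Zero R] :
    {M : Matrix m m R // M.BlockTriangular b} ≃
      (∀ a, Matrix {i // b i = a} {i // b i = a} R) × ({p : m × m // b p.1 < b p.2} → R) where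
  toFun M := (M.1.toSquareBlock b, fun p ↦ M.1 p.1.1 p.1.2)
  invFun x := ⟨.of fun i j ↦
      if h : b i = b j then x.1 (b j) ⟨i, h⟩ ⟨j, rfl⟩
      else if h : b i < b j then x.2 ⟨(i, j), h⟩ else 0,
    fun i j h ↦ by simp [h.ne', h.not_gt]⟩
  left_inv M := by
    ext i j
    rcases lt_trichotomy (b i) (b j) with h | h | h
    · simp [h, h.ne]
    · simp [h, Matrix.toSquareBlock_def]
    · simp [h.ne', h.not_gt, M.2 h]
  right_inv x := by
    refine Prod.ext (funext fun a ↦ Matrix.ext fun i j ↦ ?_) (funext fun p ↦ ?_)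
    · obtain ⟨j, rfl⟩ := j
      simp [Matrix.toSquareBlock_def, i.2]
    · simp [p.2, p.2.ne]

variable [Fintype m]

theorem two_mul_card_lt_add_sum_card_sq [Fintype α] :
    2 * Fintype.card {p : m × m // b p.1 < b p.2} + ∑ a, Fintype.card {i // b i = a} ^ 2 =
      Fintype.card m ^ 2 := by
  have card_gt : Fintype.card {p : m × m // b p.2 < b p.1} =
      Fintype.card {p : m × m // b p.1 < b p.2} :=
    Fintype.card_congr ((Equiv.prodComm m m).subtypeEquiv fun _ ↦ Iff.rfl)
  have card_eq : Fintype.card {p : m × m // b p.1 = b p.2} =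
      ∑ a, Fintype.card {i // b i = a} ^ 2 := by
    let e : {p : m × m // b p.1 = b p.2} ≃ Σ a, {i // b i = a} × {i // b i = a} :=
      { toFun p := ⟨b p.1.2, ⟨p.1.1, p.2⟩, ⟨p.1.2, rfl⟩⟩
        invFun x := ⟨(x.2.1, x.2.2), x.2.1.2.trans x.2.2.2.symm⟩
        left_inv _ := rfl
        right_inv := by rintro ⟨_, i, j, rfl⟩; rfl }
    simp only [Fintype.card_congr e, Fintype.card_sigma, Fintype.card_prod, sq]
  have trichotomy : Fintype.card {p : m × m // b p.1 < b p.2} +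
      Fintype.card {p : m × m // b p.1 = b p.2} +
      Fintype.card {p : m × m // b p.2 < b p.1} = Fintype.card m ^ 2 := by
    simp only [Fintype.card_subtype, Finset.card_filter]
    rw [← Finset.sum_add_distrib, ← Finset.sum_add_distrib, sq, ← Fintype.card_prod,
      ← Finset.card_univ, Finset.card_eq_sum_ones]
    refine Finset.sum_congr rfl fun p _ ↦ ?_
    rcases lt_trichotomy (b p.1) (b p.2) with h | h | h
    · simp [h, h.ne, h.not_gt]
    · simp [h]
    · simp [h, h.ne', h.not_gt]
  omega

theorem card_lt_add_sum_card_choose_two [Fintype α] :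
    Fintype.card {p : m × m // b p.1 < b p.2} + ∑ a, (Fintype.card {i // b i = a}).choose 2 =
      (Fintype.card m).choose 2 := by
  have sum_card : ∑ a, Fintype.card {i // b i = a} = Fintype.card m := by
    rw [← Fintype.card_sigma, Fintype.card_congr (Equiv.sigmaFiberEquiv b)]
  have sum_card_sq := two_mul_card_lt_add_sum_card_sq b
  qify at sum_card sum_card_sq ⊢
  simp only [Nat.cast_choose_two, mul_sub, mul_one, ← sq, ← Finset.sum_div,
    Finset.sum_sub_distrib, sum_card]
  linarith

variable [DecidableEq m]

variable {b} in
theorem isUnit_iff_forall_isUnit_toSquareBlock {R : Type*} [CommRing R] {M : Matrix m m R}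
    (hM : M.BlockTriangular b) : IsUnit M ↔ ∀ a, IsUnit (M.toSquareBlock b a) := by
  simp only [Matrix.isUnit_iff_isUnit_det, hM.det, IsUnit.prod_iff]
  refine ⟨fun h a ↦ ?_, fun h a _ ↦ h a⟩
  by_cases ha : a ∈ Finset.univ.image b
  · exact h a ha
  · have : IsEmpty {i // b i = a} :=
      ⟨fun i ↦ ha (Finset.mem_image.2 ⟨i, Finset.mem_univ _, i.2⟩)⟩
    exact Matrix.det_isEmpty (A := M.toSquareBlock b a) ▸ isUnit_one

/-- The restriction of `blockTriangularEquiv` to invertible matrices: the diagonal blocks become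
invertible, while the entries strictly above them stay arbitrary. -/
def isUnitBlockTriangularEquiv (R : Type*) [CommRing R] :
    {M : Matrix m m R // M.BlockTriangular b ∧ IsUnit M} ≃
      (∀ a, {A : Matrix {i // b i = a} {i // b i = a} R // IsUnit A}) ×
        ({p : m × m // b p.1 < b p.2} → R) :=
  calc {M : Matrix m m R // M.BlockTriangular b ∧ IsUnit M}
    _ ≃ {M : {M : Matrix m m R // M.BlockTriangular b} // IsUnit M.1} :=
      (Equiv.subtypeSubtypeEquivSubtypeInter _ _).symm
    _ ≃ {x : (∀ a, Matrix {i // b i = a} {i // b i = a} R) ×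
          ({p : m × m // b p.1 < b p.2} → R) // ∀ a, IsUnit (x.1 a)} :=
      (blockTriangularEquiv b R).subtypeEquiv fun M ↦
        isUnit_iff_forall_isUnit_toSquareBlock M.2
    _ ≃ {D : ∀ a, Matrix {i // b i = a} {i // b i = a} R // ∀ a, IsUnit (D a)} ×
          ({p : m × m // b p.1 < b p.2} → R) :=
      Equiv.prodSubtypeFstEquivSubtypeProd
        (p := fun D : ∀ a, Matrix {i // b i = a} {i // b i = a} R ↦ ∀ a, IsUnit (D a))
    _ ≃ _ := Equiv.subtypePiEquivPi.prodCongr (.refl _)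

theorem card_blockTriangular_isUnit [Fintype α] (F : Type*) [Field F] [Fintype F] :
    Nat.card {M : Matrix m m F // M.BlockTriangular b ∧ IsUnit M} =
      Fintype.card F ^ (Fintype.card m).choose 2 *
        ∏ a, ∏ j ∈ Finset.Icc 1 (Fintype.card {i // b i = a}), (Fintype.card F ^ j - 1) := by
  rw [Nat.card_congr (isUnitBlockTriangularEquiv b F), Nat.card_prod, Nat.card_pi, Nat.card_fun]
  simp only [card_isUnit_matrix, Nat.card_eq_fintype_card]
  rw [Finset.prod_mul_distrib, Finset.prod_pow_eq_pow_sum, mul_right_comm, ← pow_add,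
    add_comm, card_lt_add_sum_card_choose_two]

end BlockTriangular

section Composition

variable {n : ℕ} (c : Composition n)

theorem card_index_eq (i : Fin c.length) :
    Fintype.card {k // c.index k = i} = c.blocksFun i := by
  let e : {k // c.index k = i} ≃ Fin (c.blocksFun i) :=
    (c.blocksFinEquiv.symm.subtypeEquiv fun _ ↦ Iff.rfl).trans (Equiv.sigmaSubtype i)
  rw [Fintype.card_congr e, Fintype.card_fin]

theorem lt_blk_iff {S : List ℕ} {i k : ℕ} :
    i < blk S k ↔ i < S.length ∧ (S.take i).sum ≤ k := by
  have blk_eq_card : blk S k = Finset.card {j ∈ Finset.range S.length | (S.take j).sum ≤ k} := rfl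
  have sum_take_mono : Monotone fun j ↦ (S.take j).sum := S.monotone_sum_take
  rw [blk_eq_card]
  refine ⟨fun h ↦ ?_, fun ⟨hi, hk⟩ ↦ ?_⟩
  · by_contra! hik
    refine h.not_ge ((Finset.card_le_card fun j hj ↦ ?_).trans (Finset.card_range i).le)
    rw [Finset.mem_filter, Finset.mem_range] at hj
    by_contra! hij
    rw [Finset.mem_range, not_lt] at hij
    exact (hik (hij.trans_lt hj.1)).not_ge ((sum_take_mono hij).trans hj.2)
  · refine (Finset.card_range (i + 1)).ge.trans (Finset.card_le_card fun j hj ↦ ?_)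
    rw [Finset.mem_range, Nat.lt_succ_iff] at hj
    rw [Finset.mem_filter, Finset.mem_range]
    exact ⟨hj.trans_lt hi, (sum_take_mono hj).trans hk⟩

theorem blk_blocks (k : Fin n) : blk c.blocks k = c.index k + 1 := by
  refine le_antisymm (not_lt.1 fun h ↦ ?_) (lt_blk_iff.2 ⟨(c.index k).2, c.sizeUpTo_index_le k⟩)
  exact (c.lt_sizeUpTo_index_succ k).not_ge (lt_blk_iff.1 h).2

/-- `Matrix.BlockTriangular` means upper block-triangular; the order dual makes it lower. -/
theorem isBLT_blocks_iff (A : Matrix (Fin n) (Fin n) (ZMod 2)) :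
    IsBLT c.blocks A ↔ A.BlockTriangular (toDual ∘ c.index) := by
  simp only [IsBLT, blk_blocks, Matrix.BlockTriangular, Function.comp_apply, toDual_lt_toDual,
    add_lt_add_iff_right, Fin.val_fin_lt]

theorem card_BLTA_general (F : Type*) [Field F] [Fintype F] :
    Nat.card {Ab : Matrix (Fin n) (Fin n) F × (Fin n → F) //
        Ab.1.BlockTriangular (toDual ∘ c.index) ∧ IsUnit Ab.1} =
      Fintype.card F ^ (n * (n + 1) / 2) *
        (c.blocks.map fun s ↦ ∏ j ∈ Finset.Icc 1 s, (Fintype.card F ^ j - 1)).prod := by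
  have prod_blocks (f : ℕ → ℕ) :
      ∏ i, f (Fintype.card {k // (toDual ∘ c.index) k = i}) = (c.blocks.map f).prod :=
    calc ∏ i, f (Fintype.card {k // (toDual ∘ c.index) k = i})
      _ = ∏ i, f (c.blocksFun i) := Finset.prod_congr rfl fun i _ ↦ congrArg f (card_index_eq c i)
      _ = (c.blocks.map f).prod := Fin.prod_univ_fun_getElem c.blocks f
  have exponent : n * (n + 1) / 2 = n.choose 2 + n := by
    rw [mul_comm, Nat.choose_two_right, ← Nat.triangle_succ, Nat.add_sub_cancel]
  rw [Nat.card_congr (Equiv.prodSubtypeFstEquivSubtypeProd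
      (p := fun A : Matrix (Fin n) (Fin n) F ↦ A.BlockTriangular (toDual ∘ c.index) ∧ IsUnit A)),
    Nat.card_prod, card_blockTriangular_isUnit, Nat.card_fun, Nat.card_eq_fintype_card,
    Nat.card_eq_fintype_card, Fintype.card_fin, mul_right_comm, ← pow_add, exponent,
    prod_blocks fun s ↦ ∏ j ∈ Finset.Icc 1 s, (Fintype.card F ^ j - 1)]

end Composition

/-- The number of affine transformations `z ↦ Az + b` with `A` an invertible
block-lower-triangular matrix of structure `S` over `𝔽₂` and `b ∈ 𝔽₂ⁿ` is
`2^{n(n+1)/2} · ∏_{i=1}^{t} ∏_{j=2}^{s_i} (2^j − 1)`. -/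
theorem card_BLTA (n : ℕ) (hn : 0 < n) (S : List ℕ)
    (hpos : ∀ s ∈ S, 0 < s) (hsum : S.sum = n) :
    Nat.card {Ab : Matrix (Fin n) (Fin n) (ZMod 2) × (Fin n → ZMod 2) //
        IsBLT S Ab.1 ∧ IsUnit Ab.1} =
      2 ^ (n * (n + 1) / 2) *
        (S.map (fun s => ∏ j ∈ Finset.Icc 2 s, (2 ^ j - 1))).prod := by
  simpa only [← isBLT_blocks_iff, prod_Icc_one_two_pow_sub_one, ZMod.card] using
    card_BLTA_general ⟨S, hpos _, hsum⟩ (ZMod 2)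
end

section
/- Let n ≥ 2 and let S = (s₁,…,s_t) be a composition of n with s₁ ≥ 2, and let T = (2,1,…,1) be the composition of n whose first part is 2 and whose remaining n−2 parts all equal 1. Then 3 · |BLTA(S)| = |BLTA(T)| · ∏_{i=1}^{t} ∏_{j=2}^{s_i} (2^j − 1), where |BLTA(S)| denotes the number of pairs (A, b) with A an invertible n×n BLT(S) matrix over 𝔽₂ and b ∈ 𝔽₂ⁿ (and similarly for T). Equivalently, the ratio |BLTA(S)| / |BLTA(T)| — the number of equivalence classes under automorphism SC decoding — equals (1/3) · ∏_{i=1}^{t} ∏_{j=2}^{s_i} (2^j − 1). -/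
/-!
Splitting off the first block, an invertible block-lower-triangular matrix `[a 0; c d]` is a choice
of `a` in `GL_{s₁}`, an arbitrary `c`, and an invertible block-lower-triangular `d` for the
remaining blocks. As `|GL_s(𝔽_q)| = q^(s choose 2) (q - 1)^s [s]_q!`, the powers of `q` and `q - 1`
collected along the way depend only on `n`, so `|BLTA(S)|` is proportional to `∏ᵢ [sᵢ]_q!`.
For `T = (2,1,…,1)` this product is `[2]_q! = q + 1`.
-/

section QFactorial

/-- The `q`-factorial `[s]_q! = ∏_{j=1}^{s} (1 + q + ⋯ + q^(j-1))`. -/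
def qFactorial (q s : ℕ) : ℕ :=
  ∏ j ∈ Finset.Icc 1 s, ∑ i ∈ Finset.range j, q ^ i

theorem qFactorial_succ (q s : ℕ) :
    qFactorial q (s + 1) = qFactorial q s * ∑ i ∈ Finset.range (s + 1), q ^ i :=
  Finset.prod_Icc_succ_top (Nat.le_add_left 1 s) _

theorem qFactorial_one_right (q : ℕ) : qFactorial q 1 = 1 := by
  simp [qFactorial]

theorem qFactorial_two_right (q : ℕ) : qFactorial q 2 = q + 1 := by
  rw [qFactorial_succ, qFactorial_one_right, one_mul, geom_sum_two]

theorem qFactorial_two_left : qFactorial 2 = fun s ↦ ∏ j ∈ Finset.Icc 2 s, (2 ^ j - 1) := by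
  ext s
  simp only [qFactorial, Nat.geomSum_eq le_rfl, Nat.add_one_sub_one, Nat.div_one]
  refine (Finset.prod_subset (Finset.Icc_subset_Icc_left one_le_two) fun j hj hj' ↦ ?_).symm
  obtain rfl : j = 1 := by simp only [Finset.mem_Icc] at hj hj'; omega
  rfl

theorem prod_pow_sub_pow_eq_qFactorial {q : ℕ} (hq : 1 ≤ q) (s : ℕ) :
    ∏ i ∈ Finset.range s, (q ^ s - q ^ i) = q ^ s.choose 2 * (q - 1) ^ s * qFactorial q s := by
  induction s with
  | zero => simp [qFactorial]
  | succ s ih =>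
    have choose_succ : (s + 1).choose 2 = s + s.choose 2 := by
      rw [Nat.choose_succ_succ, Nat.choose_one_right]
    calc ∏ i ∈ Finset.range (s + 1), (q ^ (s + 1) - q ^ i)
        = (∏ i ∈ Finset.range s, q * (q ^ s - q ^ i)) * (q ^ (s + 1) - 1) := by
          simp only [Finset.prod_range_succ', pow_zero, pow_succ', Nat.mul_sub]
      _ = q ^ s * (q ^ s.choose 2 * (q - 1) ^ s * qFactorial q s) *
            ((∑ i ∈ Finset.range (s + 1), q ^ i) * (q - 1)) := by
          rw [Finset.prod_mul_distrib, Finset.prod_const, Finset.card_range, ih,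
            geom_sum_mul_of_one_le hq]
      _ = q ^ (s + 1).choose 2 * (q - 1) ^ (s + 1) * qFactorial q (s + 1) := by
          rw [qFactorial_succ, choose_succ]
          ring

end QFactorial

theorem add_choose_two (a b : ℕ) : (a + b).choose 2 = a.choose 2 + a * b + b.choose 2 := by
  simp only [Nat.add_choose_eq, Finset.Nat.sum_antidiagonal_eq_sum_range_succ_mk,
    Finset.sum_range_succ, Finset.sum_range_zero, Nat.choose_zero_right, Nat.choose_one_right,
    Nat.sub_self, Nat.sub_zero, Nat.add_one_sub_one]
  ring

theorem natCard_matrix (m n α : Type*) [Finite m] [Finite n] :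
    Nat.card (Matrix m n α) = Nat.card α ^ (Nat.card m * Nat.card n) := by
  rw [Matrix, Nat.card_fun, Nat.card_fun, ← pow_mul, mul_comm]

theorem natCard_GL_eq_qFactorial (K : Type*) [Field K] [Finite K] (s : ℕ) :
    Nat.card (Matrix.GeneralLinearGroup (Fin s) K) =
      Nat.card K ^ s.choose 2 * (Nat.card K - 1) ^ s * qFactorial (Nat.card K) s := by
  have := Fintype.ofFinite K
  rw [Matrix.card_GL_field, ← Nat.card_eq_fintype_card,
    Fin.prod_univ_eq_prod_range (fun i ↦ Nat.card K ^ s - Nat.card K ^ i) s,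
    prod_pow_sub_pow_eq_qFactorial Nat.card_pos]

section BlockNumber

theorem blk_cons (s : ℕ) (S : List ℕ) (k : ℕ) :
    blk (s :: S) k = (if s ≤ k then blk S (k - s) else 0) + 1 := by
  have prefix_le_iff (i : ℕ) : s + (S.take i).sum ≤ k ↔ s ≤ k ∧ (S.take i).sum ≤ k - s := by
    omega
  simp only [blk, List.length_cons, List.range_succ_eq_map, List.filter_cons, List.take_zero,
    List.sum_nil, Nat.zero_le, decide_true, if_true, List.filter_map, List.length_map,
    Function.comp_def, Nat.succ_eq_add_one, List.take_succ_cons, List.sum_cons, prefix_le_iff]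
  split_ifs with h <;> simp [h]

theorem blk_cons_of_lt {s k : ℕ} (S : List ℕ) (h : k < s) : blk (s :: S) k = 1 := by
  rw [blk_cons, if_neg h.not_ge]

theorem blk_cons_add (s : ℕ) (S : List ℕ) (k : ℕ) : blk (s :: S) (s + k) = blk S k + 1 := by
  rw [blk_cons, if_pos (Nat.le_add_right s k), Nat.add_sub_cancel_left]

theorem blk_pos {S : List ℕ} {k : ℕ} (hk : k < S.sum) : 0 < blk S k := by
  cases S with
  | nil => exact absurd hk k.not_lt_zero
  | cons s S => rw [blk_cons]; exact Nat.succ_pos _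

end BlockNumber

section BlockSplitting

variable {ι κ R : Type*} [Fintype ι] [Fintype κ] [DecidableEq ι] [DecidableEq κ] [CommRing R]

theorem isUnit_iff_of_toBlocks₁₂_eq_zero {M : Matrix (ι ⊕ κ) (ι ⊕ κ) R} (h : M.toBlocks₁₂ = 0) :
    IsUnit M ↔ IsUnit M.toBlocks₁₁ ∧ IsUnit M.toBlocks₂₂ := by
  rw [← Matrix.isUnit_fromBlocks_zero₁₂ (C := M.toBlocks₂₁), ← h, Matrix.fromBlocks_toBlocks]

/-- An invertible block matrix `[a 0; c d]` whose block `d` satisfies `P` amounts to an invertible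
`a`, an arbitrary `c`, and an invertible `d` satisfying `P`. -/
noncomputable def invertibleBlocksEquiv (P : Matrix κ κ R → Prop) :
    {M : Matrix (ι ⊕ κ) (ι ⊕ κ) R // (M.toBlocks₁₂ = 0 ∧ P M.toBlocks₂₂) ∧ IsUnit M} ≃
      Matrix.GeneralLinearGroup ι R × Matrix κ ι R × {D : Matrix κ κ R // P D ∧ IsUnit D} where
  toFun M :=
    have h := (isUnit_iff_of_toBlocks₁₂_eq_zero M.2.1.1).mp M.2.2
    (h.1.unit, M.1.toBlocks₂₁, ⟨M.1.toBlocks₂₂, M.2.1.2, h.2⟩)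
  invFun x := ⟨Matrix.fromBlocks x.1 0 x.2.1 x.2.2, ⟨rfl, x.2.2.2.1⟩,
    Matrix.isUnit_fromBlocks_zero₁₂.mpr ⟨x.1.isUnit, x.2.2.2.2⟩⟩
  left_inv M := Subtype.ext <| by
    conv_rhs => rw [← Matrix.fromBlocks_toBlocks M.1, M.2.1.1]
    rfl
  right_inv _ := Prod.ext (Units.ext rfl) rfl

end BlockSplitting

section BlockLowerTriangular

/-- The block number as an element of `ℕᵒᵈ`: dualising the order turns Mathlib's upper
`Matrix.BlockTriangular` into block-lower-triangular, so that `IsBLT S A` unfolds to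
`A.BlockTriangular (dualBlk S)`. -/
def dualBlk (S : List ℕ) {n : ℕ} (k : Fin n) : ℕᵒᵈ :=
  OrderDual.toDual (blk S k)

/-- The invertible `n × n` block-lower-triangular matrices over `R` with block structure `S`. -/
def invertibleBLT (R : Type*) [CommRing R] (S : List ℕ) (n : ℕ) : Set (Matrix (Fin n) (Fin n) R) :=
  {A | A.BlockTriangular (dualBlk S) ∧ IsUnit A}

/-- The group `BLTA(S)` of affine transformations of `Rⁿ`, with `z ↦ A z + b` encoded as the pair
`(A, b)`. -/
def blta (R : Type*) [CommRing R] (S : List ℕ) (n : ℕ) :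
    Set (Matrix (Fin n) (Fin n) R × (Fin n → R)) :=
  {Ab | Ab.1.BlockTriangular (dualBlk S) ∧ IsUnit Ab.1}

variable {S : List ℕ}

theorem blockTriangular_dualBlk_cons_iff {R : Type*} [Zero R] {s m : ℕ} (hS : S.sum = m)
    (M : Matrix (Fin s ⊕ Fin m) (Fin s ⊕ Fin m) R) :
    M.BlockTriangular (dualBlk (s :: S) ∘ finSumFinEquiv) ↔
      M.toBlocks₁₂ = 0 ∧ M.toBlocks₂₂.BlockTriangular (dualBlk S) := by
  have one_le_blk (j : Fin m) : 1 ≤ blk S j := blk_pos (hS ▸ j.is_lt)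
  simp [Matrix.BlockTriangular, Sum.forall, dualBlk, ← Matrix.ext_iff, Matrix.toBlocks₁₂,
    Matrix.toBlocks₂₂, blk_cons_of_lt, blk_cons_add, one_le_blk]

variable {R : Type*} [CommRing R]

theorem reindex_mem_invertibleBLT_cons_iff {s m : ℕ} (hS : S.sum = m)
    (M : Matrix (Fin s ⊕ Fin m) (Fin s ⊕ Fin m) R) :
    Matrix.reindex finSumFinEquiv finSumFinEquiv M ∈ invertibleBLT R (s :: S) (s + m) ↔
      (M.toBlocks₁₂ = 0 ∧ M.toBlocks₂₂.BlockTriangular (dualBlk S)) ∧ IsUnit M := by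
  rw [← blockTriangular_dualBlk_cons_iff hS, ← Matrix.blockTriangular_reindex_iff]
  exact and_congr_right' (Matrix.isUnit_submatrix_equiv _ _)

theorem natCard_invertibleBLT_nil : Nat.card (invertibleBLT R [] 0) = 1 := by
  have univ_eq : invertibleBLT R [] 0 = Set.univ :=
    Set.eq_univ_of_forall fun A ↦ ⟨fun k ↦ k.elim0, isUnit_of_subsingleton A⟩
  rw [univ_eq, Nat.card_univ, natCard_matrix, Nat.card_fin, mul_zero, pow_zero]

theorem natCard_invertibleBLT_cons {s m : ℕ} (hS : S.sum = m) :
    Nat.card (invertibleBLT R (s :: S) (s + m)) =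
      Nat.card (Matrix.GeneralLinearGroup (Fin s) R) *
        (Nat.card R ^ (m * s) * Nat.card (invertibleBLT R S m)) := by
  have splitting : invertibleBLT R (s :: S) (s + m) ≃
      Matrix.GeneralLinearGroup (Fin s) R × Matrix (Fin m) (Fin s) R × invertibleBLT R S m :=
    ((Matrix.reindex finSumFinEquiv finSumFinEquiv).subtypeEquiv fun M ↦
      (reindex_mem_invertibleBLT_cons_iff hS M).symm).symm.trans
        (invertibleBlocksEquiv (Matrix.BlockTriangular · (dualBlk S)))
  rw [Nat.card_congr splitting, Nat.card_prod, Nat.card_prod, natCard_matrix, Nat.card_fin,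
    Nat.card_fin]

variable {K : Type*} [Field K] [Finite K] {n : ℕ}

theorem natCard_invertibleBLT (hS : S.sum = n) :
    Nat.card (invertibleBLT K S n) =
      Nat.card K ^ n.choose 2 * (Nat.card K - 1) ^ n * (S.map (qFactorial (Nat.card K))).prod := by
  induction S generalizing n with
  | nil =>
    obtain rfl : n = 0 := hS.symm
    rw [natCard_invertibleBLT_nil, Nat.choose_zero_succ, pow_zero, pow_zero, List.map_nil,
      List.prod_nil, mul_one, mul_one]
  | cons s S ih =>
    obtain rfl : n = s + S.sum := by rw [← hS, List.sum_cons]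
    rw [natCard_invertibleBLT_cons rfl, ih rfl, natCard_GL_eq_qFactorial, add_choose_two,
      List.map_cons, List.prod_cons]
    ring

theorem natCard_blta (hS : S.sum = n) :
    Nat.card (blta K S n) =
      Nat.card K ^ n.choose 2 * (Nat.card K - 1) ^ n * (S.map (qFactorial (Nat.card K))).prod *
        Nat.card K ^ n := by
  have blta_eq_prod : blta K S n = invertibleBLT K S n ×ˢ Set.univ := by
    ext; simp [blta, invertibleBLT]
  rw [blta_eq_prod, Nat.card_congr (Equiv.Set.prod _ _), Nat.card_prod, natCard_invertibleBLT hS,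
    Nat.card_univ, Nat.card_fun, Nat.card_fin]

end BlockLowerTriangular

theorem card_equivalence_classes_SC_general {K : Type*} [Field K] [Finite K] {n : ℕ}
    (hn : 2 ≤ n) {S : List ℕ} (hsum : S.sum = n) :
    (Nat.card K + 1) * Nat.card (blta K S n) =
      Nat.card (blta K (2 :: List.replicate (n - 2) 1) n) *
        (S.map (qFactorial (Nat.card K))).prod := by
  have hT : (2 :: List.replicate (n - 2) 1).sum = n := by
    rw [List.sum_cons, List.sum_replicate, smul_eq_mul, mul_one, Nat.add_sub_cancel' hn]
  rw [natCard_blta hsum, natCard_blta hT, List.map_cons, List.prod_cons, List.map_replicate,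
    List.prod_replicate, qFactorial_one_right, one_pow, mul_one, qFactorial_two_right]
  ring

/-- For a composition `S` of `n` with `s₁ ≥ 2`, and `T = (2,1,…,1)`,
`3 · |BLTA(S)| = |BLTA(T)| · ∏_{i=1}^{t} ∏_{j=2}^{s_i} (2^j − 1)`, i.e. the number
of equivalence classes `|BLTA(S)|/|BLTA(T)|` equals `(1/3) ∏ᵢ ∏_{j=2}^{s_i} (2^j−1)`. -/
theorem card_equivalence_classes_SC (n : ℕ) (hn : 2 ≤ n) (S : List ℕ)
    (hpos : ∀ s ∈ S, 0 < s) (hsum : S.sum = n) (hhead : 2 ≤ S.headI) :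
    3 * Nat.card {Ab : Matrix (Fin n) (Fin n) (ZMod 2) × (Fin n → ZMod 2) //
          IsBLT S Ab.1 ∧ IsUnit Ab.1} =
      Nat.card {Ab : Matrix (Fin n) (Fin n) (ZMod 2) × (Fin n → ZMod 2) //
          IsBLT (2 :: List.replicate (n - 2) 1) Ab.1 ∧ IsUnit Ab.1} *
        (S.map (fun s => ∏ j ∈ Finset.Icc 2 s, (2 ^ j - 1))).prod := by
  have count := card_equivalence_classes_SC_general (K := ZMod 2) hn hsum
  rwa [Nat.card_zmod, qFactorial_two_left] at count
end

section
/- Let n be a positive integer and let S = (s₁,…,s_t) be a composition of n. For every invertible n×n matrix A over 𝔽₂ that is block-lower-triangular with structure S, there exist a permutation matrix P that is BLT(S), an invertible upper-triangular matrix U that is BLT(S), and an invertible lower-triangular matrix L over 𝔽₂, such that A = P · U · L. (Consequently, each equivalence class under automorphism SC decoding contains at least one automorphism of the form P·U.) -/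
/-- `P` is a permutation matrix: a 0–1 matrix with `P i j = 1` iff `i = σ j`
for some permutation `σ`. -/
def IsPermMatrix {n : ℕ} (P : Matrix (Fin n) (Fin n) (ZMod 2)) : Prop :=
  ∃ σ : Equiv.Perm (Fin n), ∀ i j : Fin n, P i j = if i = σ j then 1 else 0

/-!
Elimination on the last column writes any square matrix over a division ring as `A = P * U * L`.
Block structure is then automatic. Since `L` is lower triangular, `A * L⁻¹ = P * U` is still
block-lower-triangular; as the diagonal of `U` does not vanish, the nonzero entries of `P` occur
among the positions where `P * U` is nonzero, so `P` is block-lower-triangular, and hence so is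
`U = P⁻¹ * (A * L⁻¹)`.
-/

open Matrix OrderDual

section Factorization

variable {m n p α R K : Type*} [Fintype m] [Fintype n] [Fintype p]

/-- Some row permutation of `A` is an upper times a lower triangular matrix, where each index `i`
is ranked by `f i`. The permutation acts by reindexing rather than by a permutation matrix, and
ranking by `f` rather than by an order on `m` lets the indices be relabelled freely. -/
def HasPermULFactorization [Preorder α] [NonUnitalNonAssocSemiring R] (f : m → α)
    (A : Matrix m m R) : Prop :=
  ∃ (σ : Equiv.Perm m) (U L : Matrix m m R),
    U.BlockTriangular f ∧ L.BlockTriangular (toDual ∘ f) ∧ A.submatrix σ id = U * L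

namespace HasPermULFactorization

theorem of_submatrix_perm [Preorder α] [NonUnitalNonAssocSemiring R] {f : m → α}
    {A : Matrix m m R} (τ : Equiv.Perm m) (h : HasPermULFactorization f (A.submatrix τ id)) :
    HasPermULFactorization f A := by
  obtain ⟨σ, U, L, hU, hL, hUL⟩ := h
  exact ⟨σ.trans τ, U, L, hU, hL, hUL⟩

theorem of_submatrix_equiv [Preorder α] [NonUnitalNonAssocSemiring R] {f : m → α}
    {A : Matrix m m R} (e : n ≃ m) (h : HasPermULFactorization (f ∘ e) (A.submatrix e e)) :
    HasPermULFactorization f A := by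
  obtain ⟨σ, U, L, hU, hL, hUL⟩ := h
  refine ⟨e.permCongr σ, reindex e e U, reindex e e L, blockTriangular_reindex_iff.mpr hU,
    blockTriangular_reindex_iff.mpr hL, ?_⟩
  rw [reindex_apply, reindex_apply, submatrix_mul_equiv, ← hUL]
  ext i j
  simp

theorem fromBlocks_of_schur [Preorder α] [Ring R] {f : m ⊕ p → α} {A : Matrix m m R}
    {B X : Matrix m p R} {C : Matrix p m R} {D : Matrix p p R}
    (hf : ∀ i j, f (.inl i) ≤ f (.inr j)) (hX : X * D = B)
    (hD : D.BlockTriangular (toDual ∘ f ∘ .inr))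
    (hS : HasPermULFactorization (f ∘ .inl) (A - X * C)) :
    HasPermULFactorization f (fromBlocks A B C D) := by
  classical
  obtain ⟨σ, U, L, hU, hL, hUL⟩ := hS
  refine ⟨σ.sumCongr (Equiv.refl p), fromBlocks U (X.submatrix σ id) 0 1, fromBlocks L 0 C D,
    ?_, ?_, ?_⟩
  · rintro (i | i) (j | j) hij
    · exact hU hij
    · exact absurd hij (hf i j).not_gt
    · rfl
    · exact blockTriangular_one (b := f ∘ .inr) hij
  · rintro (i | i) (j | j) hij
    · exact hL hij
    · rfl
    · exact absurd hij (hf j i).not_gt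
    · exact hD hij
  · have hA : A.submatrix σ id = U * L + X.submatrix σ id * C := by
      rw [← hUL, submatrix_sub]
      exact (sub_add_cancel _ _).symm
    have hB : B.submatrix σ id = X.submatrix σ id * D := by
      rw [← hX]
      rfl
    simp only [fromBlocks_multiply, Matrix.mul_zero, Matrix.zero_mul, Matrix.one_mul, zero_add,
      ← hA, ← hB]
    ext (i | i) (j | j) <;> rfl

end HasPermULFactorization

theorem exists_perm_apply_eq_zero_imp {ι β : Type*} [Zero β] (v : ι → β) (i : ι) :
    ∃ τ : Equiv.Perm ι, v (τ i) = 0 → ∀ k, v k = 0 := by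
  classical
  by_cases! h : ∃ r, v r ≠ 0
  · obtain ⟨r, hr⟩ := h
    exact ⟨Equiv.swap i r, fun h0 => absurd (Equiv.swap_apply_left i r ▸ h0) hr⟩
  · exact ⟨1, fun _ => h⟩

theorem hasPermULFactorization_sum_unit [Preorder α] [DivisionRing K] {f : m ⊕ Unit → α}
    (hf : ∀ i j, f (.inl i) ≤ f (.inr j))
    (hS : ∀ S : Matrix m m K, HasPermULFactorization (f ∘ .inl) S)
    (A : Matrix (m ⊕ Unit) (m ⊕ Unit) K) : HasPermULFactorization f A := by
  obtain ⟨τ, hτ⟩ := exists_perm_apply_eq_zero_imp (fun i => A i (.inr ())) (.inr ())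
  refine .of_submatrix_perm τ ?_
  rw [← fromBlocks_toBlocks (A.submatrix τ id)]
  -- If the pivot is zero then so is the whole last column, and `x / 0 = 0` still gives `X * D = B`.
  refine .fromBlocks_of_schur
    (X := of fun i _ => A (τ (.inl i)) (.inr ()) / A (τ (.inr ())) (.inr ())) hf ?_
    (fun _ _ h => absurd h (lt_irrefl _)) (hS _)
  ext i j
  have hcol : A (τ (.inr ())) (.inr ()) = 0 → A (τ (.inl i)) (.inr ()) = 0 := fun h => hτ h _
  simpa [mul_apply, toBlocks₁₂, toBlocks₂₂] using div_mul_cancel_of_imp hcol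

theorem hasPermULFactorization [LinearOrder α] [DivisionRing K] (f : m → α) (A : Matrix m m K) :
    HasPermULFactorization f A := by
  classical
  induction hm : Fintype.card m using Nat.strong_induction_on generalizing m with
  | h _ ih =>
  cases isEmpty_or_nonempty m with
  | inl _ => exact ⟨1, A, 1, isEmptyElim, isEmptyElim, Subsingleton.elim _ _⟩
  | inr _ =>
    obtain ⟨i₀, hi₀⟩ := Finite.exists_max f
    refine .of_submatrix_equiv (Equiv.subtypeNeSumPUnit i₀) ?_
    refine hasPermULFactorization_sum_unit ?_ (fun S => ?_) _
    · exact fun i _ => hi₀ i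
    · exact ih _ (hm ▸ Fintype.card_subtype_lt (not_not.mpr rfl)) _ S rfl

theorem exists_permMatrix_mul_upper_mul_lower [DivisionRing K] [DecidableEq m] [LinearOrder m]
    (A : Matrix m m K) :
    ∃ (σ : Equiv.Perm m) (U L : Matrix m m K),
      U.IsUpperTriangular ∧ L.IsLowerTriangular ∧ A = σ.permMatrix K * U * L := by
  obtain ⟨σ, U, L, hU, hL, hUL⟩ := hasPermULFactorization id A
  refine ⟨σ.symm, U, L, hU, hL, ?_⟩
  rw [Matrix.mul_assoc, ← hUL, PEquiv.toMatrix_toPEquiv_mul, submatrix_submatrix]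
  simp

end Factorization

section BlockTriangular

variable {m α R : Type*} [Fintype m] [DecidableEq m]

theorem apply_self_ne_zero_of_isUpperTriangular [LinearOrder m] [CommRing R] [Nontrivial R]
    {U : Matrix m m R} (hU : U.IsUpperTriangular) (hunit : IsUnit U) (i : m) : U i i ≠ 0 := by
  rw [isUnit_iff_isUnit_det, det_of_isUpperTriangular hU, IsUnit.prod_univ_iff] at hunit
  exact (hunit i).ne_zero

theorem blockTriangular_permMatrix_of_mul [LT α] [NonAssocSemiring R] {b : m → α}
    {σ : Equiv.Perm m} {U : Matrix m m R} (hU : ∀ i, U i i ≠ 0)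
    (h : (σ.permMatrix R * U).BlockTriangular b) : (σ.permMatrix R).BlockTriangular b := by
  intro i j hij
  have hne : σ i ≠ j := by
    rintro rfl
    exact hU (σ i) (by simpa [PEquiv.toMatrix_toPEquiv_mul] using h hij)
  simp [hne]

end BlockTriangular

theorem PUL_decomposition_BLT_general {m α K : Type*} [Fintype m] [LinearOrder m]
    [LinearOrder α] [Field K] {b : m → α} (hb : Monotone b) {A : Matrix m m K}
    (hA : A.BlockTriangular (toDual ∘ b)) (hinv : IsUnit A) :
    ∃ (σ : Equiv.Perm m) (U L : Matrix m m K),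
      (σ.permMatrix K).BlockTriangular (toDual ∘ b) ∧
      U.IsUpperTriangular ∧ U.BlockTriangular (toDual ∘ b) ∧ IsUnit U ∧
      L.IsLowerTriangular ∧ IsUnit L ∧ A = σ.permMatrix K * U * L := by
  obtain ⟨σ, U, L, hU, hL, rfl⟩ := exists_permMatrix_mul_upper_mul_lower A
  obtain ⟨⟨hPunit, hUunit⟩, hLunit⟩ :
      (IsUnit (σ.permMatrix K) ∧ IsUnit U) ∧ IsUnit L := by
    simpa only [isUnit_iff_isUnit_det, det_mul, IsUnit.mul_iff] using hinv
  have hLb : L.BlockTriangular (toDual ∘ b) := fun i j hij => hL (hb.reflect_lt hij)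
  have hPU : (σ.permMatrix K * U).BlockTriangular (toDual ∘ b) := by
    have := hLunit.invertible
    simpa [Matrix.mul_assoc] using hA.mul (blockTriangular_inv_of_blockTriangular hLb)
  have hP : (σ.permMatrix K).BlockTriangular (toDual ∘ b) :=
    blockTriangular_permMatrix_of_mul (apply_self_ne_zero_of_isUpperTriangular hU hUunit) hPU
  have hUb : U.BlockTriangular (toDual ∘ b) := by
    have := hPunit.invertible
    simpa [← Matrix.mul_assoc] using (blockTriangular_inv_of_blockTriangular hP).mul hPU
  exact ⟨σ, U, L, hP, hU, hUb, hUunit, hL, hLunit, rfl⟩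

theorem monotone_blk (S : List ℕ) : Monotone (blk S) := fun _ _ hkl =>
  (List.monotone_filter_right _ fun _ hi =>
    decide_eq_true ((of_decide_eq_true hi).trans hkl)).length_le

theorem isBLT_iff_blockTriangular {S : List ℕ} {n : ℕ} {A : Matrix (Fin n) (Fin n) (ZMod 2)} :
    IsBLT S A ↔ A.BlockTriangular (toDual ∘ fun k : Fin n => blk S k) :=
  Iff.rfl

theorem isPermMatrix_permMatrix {n : ℕ} (σ : Equiv.Perm (Fin n)) :
    IsPermMatrix (σ.permMatrix (ZMod 2)) :=
  ⟨σ.symm, fun i j => by simp [Equiv.eq_symm_apply, eq_comm]⟩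

/-- Every invertible BLT(S) matrix `A` over `𝔽₂` decomposes as `A = P·U·L` with
`P` a BLT(S) permutation matrix, `U` an invertible upper-triangular BLT(S) matrix,
and `L` an invertible lower-triangular matrix. -/
theorem PUL_decomposition_BLT (n : ℕ) (hn : 0 < n) (S : List ℕ)
    (hpos : ∀ s ∈ S, 0 < s) (hsum : S.sum = n)
    (A : Matrix (Fin n) (Fin n) (ZMod 2)) (hA : IsBLT S A) (hinv : IsUnit A) :
    ∃ P U L : Matrix (Fin n) (Fin n) (ZMod 2),
      IsPermMatrix P ∧ IsBLT S P ∧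
      (∀ i j : Fin n, (j : ℕ) < (i : ℕ) → U i j = 0) ∧ IsBLT S U ∧ IsUnit U ∧
      (∀ i j : Fin n, (i : ℕ) < (j : ℕ) → L i j = 0) ∧ IsUnit L ∧
      A = P * U * L := by
  obtain ⟨σ, U, L, hP, hU, hUb, hUunit, hL, hLunit, h⟩ :=
    PUL_decomposition_BLT_general ((monotone_blk S).comp Fin.val_strictMono.monotone)
      (isBLT_iff_blockTriangular.mp hA) hinv
  exact ⟨_, U, L, isPermMatrix_permMatrix σ, isBLT_iff_blockTriangular.mpr hP, fun _ _ h => hU h,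
    isBLT_iff_blockTriangular.mpr hUb, hUunit, fun _ _ h => hL h, hLunit, h⟩
end
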